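/- For every integer d ≥ 1 and all real numbers a, b with 1 < a < b < ∞, there exists a constant C = C(d,a,b) > 0 such that: for every open ball B ⊂ ℝ^d, every finite family u_1, …, u_N of continuously differentiable functions from ℝ^d to ℂ whose restrictions to B are orthonormal in L²(B), and every choice of coefficients λ_1, …, λ_N ∈ [0,1], if a ≤ ∫_B ρ(x) dx ≤ b where ρ(x) = Σ_{n=1}^N λ_n |u_n(x)|², then Σ_{n=1}^N λ_n ∫_B |∇u_n(x)|² dx ≥ (1/C) ∫_B ρ(x)^{1+2/d} dx. -/

import Mathlib

open MeasureTheory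
open scoped BigOperators

/-- `|∇f(x)|² = Σᵢ |∂ᵢ f(x)|²` for a function `f : ℝ^d → ℂ`. -/
noncomputable def gradSq {d : ℕ} (f : EuclideanSpace ℝ (Fin d) → ℂ)
    (x : EuclideanSpace ℝ (Fin d)) : ℝ :=
  ∑ i : Fin d, ‖fderiv ℝ f x (EuclideanSpace.single i 1)‖ ^ 2

open scoped ENNReal


theorem lt_sq_lintegral {α : Type*} [MeasurableSpace α] (μ : Measure α) [IsProbabilityMeasure μ]
    (f : α → ℝ≥0∞) (hf : AEMeasurable f μ) : (∫⁻ x, f x ∂μ) ^ 2 ≤ ∫⁻ x, f x ^ 2 ∂μ := by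
  have h := ENNReal.lintegral_mul_le_Lp_mul_Lq μ (Real.HolderConjugate.two_two) hf
    (aemeasurable_const (b := (1 : ℝ≥0∞)))
  simp at h
  have h2 := pow_le_pow_left₀ (by simp) h 2
  rw [← ENNReal.rpow_natCast, ← ENNReal.rpow_natCast, ← ENNReal.rpow_mul] at h2
  norm_num at h2
  exact h2

theorem lt_seg {V E : Type*} [NormedAddCommGroup V] [NormedSpace ℝ V] [NormedAddCommGroup E]
    [NormedSpace ℝ E] [CompleteSpace E] (g : V → E) (hg : ContDiff ℝ 1 g) (x y : V) (s : ℝ) :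
    ‖g x - g (x + s • (y - x))‖ₑ ^ 2 ≤ ‖s • (y - x)‖ₑ ^ 2 *
      ∫⁻ t in Set.Ioc (0 : ℝ) 1, ‖fderiv ℝ g (x + (t * s) • (y - x))‖ₑ ^ 2 := by
  have hc : Continuous (fun t : ℝ => fderiv ℝ g (x + (t * s) • (y - x))) :=
    (hg.continuous_fderiv one_ne_zero).comp (by fun_prop)
  have hd : ∀ t : ℝ, HasDerivAt (fun t : ℝ => g (x + (t * s) • (y - x)))
      (fderiv ℝ g (x + (t * s) • (y - x)) (s • (y - x))) t := by
    intro t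
    have h1 : HasDerivAt (fun t : ℝ => x + (t * s) • (y - x)) (s • (y - x)) t := by
      have := (((hasDerivAt_id t).mul_const s).smul_const (y - x)).const_add x
      simpa using this
    exact ((hg.differentiable one_ne_zero) _).hasFDerivAt.comp_hasDerivAt t h1
  have h := intervalIntegral.integral_eq_sub_of_hasDerivAt (a := 0) (b := 1) (fun t _ => hd t)
    ((hc.clm_apply continuous_const).intervalIntegrable _ _)
  simp only [one_mul, zero_mul, zero_smul, add_zero] at h
  rw [← enorm_neg, neg_sub, ← h, intervalIntegral.integral_of_le zero_le_one]
  have : IsProbabilityMeasure (volume.restrict (Set.Ioc (0 : ℝ) 1)) := ⟨by simp⟩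
  calc _ ≤ (∫⁻ t in Set.Ioc (0 : ℝ) 1, ‖s • (y - x)‖ₑ * ‖fderiv ℝ g (x + (t * s) • (y - x))‖ₑ) ^ 2 := by
        gcongr
        refine (enorm_integral_le_lintegral_enorm _).trans (lintegral_mono fun t => ?_)
        exact ((fderiv ℝ g (x + (t * s) • (y - x))).le_opENorm _).trans_eq (mul_comm _ _)
    _ = ‖s • (y - x)‖ₑ ^ 2 * (∫⁻ t in Set.Ioc (0 : ℝ) 1, ‖fderiv ℝ g (x + (t * s) • (y - x))‖ₑ) ^ 2 := by
        rw [lintegral_const_mul _ hc.enorm.measurable, mul_pow]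
    _ ≤ _ := by
        gcongr
        exact lt_sq_lintegral _ _ hc.enorm.measurable.aemeasurable

theorem lt_half {d : ℕ} (c : EuclideanSpace ℝ (Fin d)) (R : ℝ) (s : ℝ) (hs : 0 < s) (hs1 : s ≤ 1)
    (F : EuclideanSpace ℝ (Fin d) → ℝ≥0∞) (hF : Measurable F) (x : EuclideanSpace ℝ (Fin d))
    (hx : x ∈ Metric.ball c R) :
    ∫⁻ y in Metric.ball c R, F (x + s • (y - x)) ≤
      ENNReal.ofReal ((s ^ d)⁻¹) * ∫⁻ y in Metric.ball c R, F y := by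
  have hB : MeasurableSet (Metric.ball c R) := measurableSet_ball
  rw [← lintegral_indicator hB, ← lintegral_indicator hB]
  set H := (Metric.ball c R).indicator F with hH
  have hHm : Measurable H := hF.indicator hB
  calc _ ≤ ∫⁻ y, H (x + s • (y - x)) := by
        refine lintegral_mono fun y => ?_
        by_cases hy : y ∈ Metric.ball c R
        · have hz : x + s • (y - x) ∈ Metric.ball c R := by
            have := (convex_ball c R) hx hy (a := 1 - s) (b := s) (by linarith) hs.le (by ring)
            convert this using 1
            module
          simp [hH, hy, hz]
        · simp [hy]
    _ = ∫⁻ y, (fun z => H (x + z)) (s • y) := by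
        exact lintegral_sub_right_eq_self (μ := volume) (fun y => H (x + s • y)) x
    _ = ∫⁻ z, H (x + z) ∂(Measure.map (fun y => s • y) volume) := by
        rw [lintegral_map (by fun_prop) (by fun_prop)]
    _ = ENNReal.ofReal ((s ^ d)⁻¹) * ∫⁻ z, H (x + z) := by
        have := Measure.map_addHaar_smul (volume : Measure (EuclideanSpace ℝ (Fin d))) hs.ne'
        rw [this]
        simp [abs_of_pos (pow_pos hs d)]
    _ = _ := by
        rw [lintegral_add_left_eq_self]

theorem lt_double {d : ℕ} (c : EuclideanSpace ℝ (Fin d)) (R : ℝ) (s : ℝ) (hs : 0 ≤ s) (hs1 : s ≤ 1)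
    (F : EuclideanSpace ℝ (Fin d) → ℝ≥0∞) (hF : Measurable F) :
    ∫⁻ x in Metric.ball c R, ∫⁻ y in Metric.ball c R, F (x + s • (y - x)) ≤
      2 ^ d * volume (Metric.ball c R) * ∫⁻ y in Metric.ball c R, F y := by
  have hB : MeasurableSet (Metric.ball c R) := measurableSet_ball
  have key : ∀ t : ℝ, 1 / 2 ≤ t → t ≤ 1 →
      ∫⁻ x in Metric.ball c R, ∫⁻ y in Metric.ball c R, F (x + t • (y - x)) ≤
      2 ^ d * volume (Metric.ball c R) * ∫⁻ y in Metric.ball c R, F y := by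
    intro t ht ht1
    have ht0 : 0 < t := by linarith
    have hb : ENNReal.ofReal ((t ^ d)⁻¹) ≤ 2 ^ d := by
      have : (t ^ d)⁻¹ ≤ 2 ^ d := by
        rw [← inv_pow]
        have : t⁻¹ ≤ 2 := by
          rw [inv_le_comm₀ ht0 two_pos]; linarith
        gcongr
      refine (ENNReal.ofReal_le_ofReal this).trans ?_
      rw [ENNReal.ofReal_pow (by norm_num)]
      simp
    calc _ ≤ ∫⁻ x in Metric.ball c R, (2 ^ d * ∫⁻ y in Metric.ball c R, F y) := by
          refine setLIntegral_mono measurable_const fun x hx => ?_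
          refine (lt_half c R t ht0 ht1 F hF x hx).trans ?_
          gcongr
      _ = _ := by
          rw [lintegral_const, Measure.restrict_apply_univ]; ring
  rcases le_total (1 / 2) s with h | h
  · exact key s h hs1
  · rw [lintegral_lintegral_swap]
    · convert key (1 - s) (by linarith) (by linarith) using 5 with x y
      congr 1
      module
    · apply Measurable.aemeasurable
      exact hF.comp (by fun_prop)

theorem lt_D {d : ℕ} {E : Type*} [NormedAddCommGroup E] [NormedSpace ℝ E] [CompleteSpace E]
    (c : EuclideanSpace ℝ (Fin d)) (R : ℝ) (s : ℝ) (hs : 0 ≤ s) (hs1 : s ≤ 1)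
    (g : EuclideanSpace ℝ (Fin d) → E) (hg : ContDiff ℝ 1 g) :
    ∫⁻ x in Metric.ball c R, ∫⁻ y in Metric.ball c R, ‖g x - g (x + s • (y - x))‖ₑ ^ 2 ≤
      ENNReal.ofReal (2 * R * s) ^ 2 * (2 ^ d * volume (Metric.ball c R) *
        ∫⁻ y in Metric.ball c R, ‖fderiv ℝ g y‖ₑ ^ 2) := by
  have hB : MeasurableSet (Metric.ball c R) := measurableSet_ball
  have hc : Continuous (fun y => ‖fderiv ℝ g y‖ₑ ^ 2) :=
    (ENNReal.continuous_pow 2).comp (hg.continuous_fderiv one_ne_zero).enorm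
  have hm := hc.measurable
  set F := (fun y => ‖fderiv ℝ g y‖ₑ ^ 2) with hF
  calc _ ≤ ∫⁻ x in Metric.ball c R, ∫⁻ y in Metric.ball c R, ENNReal.ofReal (2 * R * s) ^ 2 *
          ∫⁻ t in Set.Ioc (0 : ℝ) 1, F (x + (t * s) • (y - x)) := by
        refine setLIntegral_mono' hB fun x hx => setLIntegral_mono' hB fun y hy => ?_
        refine (lt_seg g hg x y s).trans ?_
        gcongr
        rw [← ofReal_norm, norm_smul, Real.norm_of_nonneg hs]
        apply ENNReal.ofReal_le_ofReal
        rw [mul_comm]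
        gcongr
        rw [Metric.mem_ball] at hx hy
        rw [← dist_eq_norm]
        have := dist_triangle_right y x c
        linarith
    _ = ENNReal.ofReal (2 * R * s) ^ 2 * ∫⁻ x in Metric.ball c R, ∫⁻ y in Metric.ball c R, 
          ∫⁻ t in Set.Ioc (0 : ℝ) 1, F (x + (t * s) • (y - x)) := by
        rw [← lintegral_const_mul' _ _ (by simp)]
        congr 1; ext x
        rw [← lintegral_const_mul' _ _ (by simp)]
    _ = ENNReal.ofReal (2 * R * s) ^ 2 * ∫⁻ t in Set.Ioc (0 : ℝ) 1,
          ∫⁻ x in Metric.ball c R, ∫⁻ y in Metric.ball c R, F (x + (t * s) • (y - x)) := by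
        congr 1
        have h1 : ∀ x, ∫⁻ y in Metric.ball c R, ∫⁻ t in Set.Ioc (0 : ℝ) 1,
            F (x + (t * s) • (y - x)) = ∫⁻ t in Set.Ioc (0 : ℝ) 1, ∫⁻ y in Metric.ball c R,
            F (x + (t * s) • (y - x)) := by
          intro x
          rw [lintegral_lintegral_swap]
          apply Measurable.aemeasurable
          exact hm.comp (by fun_prop)
        simp_rw [h1]
        rw [lintegral_lintegral_swap]
        apply Measurable.aemeasurable
        refine Measurable.lintegral_prod_right' (f := fun p : (EuclideanSpace ℝ (Fin d) × ℝ) ×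
          EuclideanSpace ℝ (Fin d) => F (p.1.1 + (p.1.2 * s) • (p.2 - p.1.1))) ?_
        exact hm.comp (by fun_prop)
    _ ≤ ENNReal.ofReal (2 * R * s) ^ 2 * ∫⁻ t in Set.Ioc (0 : ℝ) 1,
          (2 ^ d * volume (Metric.ball c R) * ∫⁻ y in Metric.ball c R, F y) := by
        refine mul_le_mul_right ?_ _
        refine setLIntegral_mono' measurableSet_Ioc fun t ht => ?_
        exact lt_double c R (t * s) (mul_nonneg ht.1.le hs) (mul_le_one₀ ht.2 hs hs1) F hm
    _ = _ := by simp

theorem lt_cutoff : ∃ (f : ℝ → ℝ) (K : ℝ), 0 < K ∧ ContDiff ℝ 1 f ∧ (∀ t ≤ 1, f t = 0) ∧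
    (∀ t, 4 ≤ t → f t = 1) ∧ (∀ t, |deriv f t| ≤ K) ∧ (∀ t, (t < 1 ∨ 4 ≤ t) → deriv f t = 0) := by
  have hf : ContDiff ℝ 1 (fun t : ℝ => Real.smoothTransition (t - 2)) :=
    Real.smoothTransition.contDiff.comp (by fun_prop)
  have h0 : ∀ t : ℝ, (t < 2 ∨ 3 < t) → deriv (fun t : ℝ => Real.smoothTransition (t - 2)) t = 0 := by
    rintro t (h | h)
    · have : (fun t : ℝ => Real.smoothTransition (t - 2)) =ᶠ[nhds t] fun _ => 0 := by
        filter_upwards [eventually_lt_nhds h] with x hx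
        exact Real.smoothTransition.zero_of_nonpos (by linarith)
      rw [this.deriv_eq]; simp
    · have : (fun t : ℝ => Real.smoothTransition (t - 2)) =ᶠ[nhds t] fun _ => 1 := by
        filter_upwards [eventually_gt_nhds h] with x hx
        exact Real.smoothTransition.one_of_one_le (by linarith)
      rw [this.deriv_eq]; simp
  obtain ⟨K, hK⟩ := (isCompact_Icc (a := (2 : ℝ)) (b := 3)).exists_bound_of_continuousOn
    (hf.continuous_deriv le_rfl).continuousOn
  refine ⟨_, max K 1, by positivity, hf, ?_, ?_, ?_, ?_⟩
  · intro t ht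
    exact Real.smoothTransition.zero_of_nonpos (by linarith)
  · intro t ht
    exact Real.smoothTransition.one_of_one_le (by linarith)
  · intro t
    by_cases h : t < 2 ∨ 3 < t
    · rw [h0 t h]; simp
    · push Not at h
      exact (hK t h).trans (le_max_left _ _)
  · intro t ht
    exact h0 t (by rcases ht with h | h <;> [left; right] <;> linarith)

theorem lt_grad {d : ℕ} (f : ℝ → ℝ) (K : ℝ) (hf : ContDiff ℝ 1 f)
    (hfK : ∀ t, |deriv f t| ≤ K) (hf' : ∀ t, (t < 1 ∨ 4 ≤ t) → deriv f t = 0)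
    (ρ G : EuclideanSpace ℝ (Fin d) → ℝ) (hρ : ContDiff ℝ 1 ρ) 
    (hG0 : ∀ x, 0 ≤ G x) (hρG : ∀ x, ‖fderiv ℝ ρ x‖ ^ 2 ≤ 4 * ρ x * G x)
    (θ : ℝ) (hθ : 0 < θ) (x : EuclideanSpace ℝ (Fin d)) :
    ‖fderiv ℝ (fun x => f (ρ x / θ)) x‖ₑ ^ 2 ≤
      {x | θ ≤ ρ x ∧ ρ x < 4 * θ}.indicator
        (fun x => ENNReal.ofReal (16 * K ^ 2 / θ) * ENNReal.ofReal (G x)) x := by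
  have hd : HasFDerivAt (fun x => f (ρ x / θ)) (deriv f (ρ x / θ) • (θ⁻¹ • fderiv ℝ ρ x)) x := by
    have h1 : HasFDerivAt (fun x => ρ x / θ) (θ⁻¹ • fderiv ℝ ρ x) x := by
      simp_rw [div_eq_mul_inv]
      exact ((hρ.differentiable one_ne_zero) x).hasFDerivAt.mul_const θ⁻¹
    exact ((hf.differentiable one_ne_zero) _).hasDerivAt.comp_hasFDerivAt x h1
  rw [hd.fderiv]
  by_cases h : x ∈ {x | θ ≤ ρ x ∧ ρ x < 4 * θ}
  · rw [Set.indicator_of_mem h, ← ENNReal.ofReal_mul (by positivity), ← ofReal_norm,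
      ← ENNReal.ofReal_pow (by positivity)]
    apply ENNReal.ofReal_le_ofReal
    rw [norm_smul, norm_smul, mul_pow, mul_pow, Real.norm_eq_abs, norm_inv, Real.norm_of_nonneg hθ.le]
    have hK : |deriv f (ρ x / θ)| ^ 2 ≤ K ^ 2 := by
      have := hfK (ρ x / θ)
      gcongr
    have h2 : ‖fderiv ℝ ρ x‖ ^ 2 ≤ 4 * (4 * θ) * G x := by
      refine (hρG x).trans ?_
      have := hG0 x
      have := h.2.le
      gcongr
    calc _ ≤ K ^ 2 * (θ⁻¹ ^ 2 * (4 * (4 * θ) * G x)) := by gcongr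
      _ = _ := by field_simp; ring
  · have : deriv f (ρ x / θ) = 0 := by
      apply hf'
      by_contra! hc
      apply h
      constructor
      · have := hc.1
        rwa [le_div_iff₀ hθ, one_mul] at this
      · have := hc.2
        rwa [div_lt_iff₀ hθ] at this
    simp only [this, zero_smul]
    refine le_trans (le_of_eq ?_) zero_le
    rw [← ofReal_norm, norm_zero]; simp

theorem lt_level {d : ℕ} (f : ℝ → ℝ) (K : ℝ) (hf : ContDiff ℝ 1 f)
    (hf0 : ∀ t ≤ 1, f t = 0) (hf1 : ∀ t, 4 ≤ t → f t = 1)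
    (hfK : ∀ t, |deriv f t| ≤ K) (hf' : ∀ t, (t < 1 ∨ 4 ≤ t) → deriv f t = 0)
    (ρ G : EuclideanSpace ℝ (Fin d) → ℝ) (hρ : ContDiff ℝ 1 ρ)
    (hG0 : ∀ x, 0 ≤ G x) (hρG : ∀ x, ‖fderiv ℝ ρ x‖ ^ 2 ≤ 4 * ρ x * G x)
    (θ : ℝ) (hθ : 0 < θ) (c : EuclideanSpace ℝ (Fin d)) (R : ℝ) (hR : 0 < R)
    (s : ℝ) (hs : 0 < s) (hs1 : s ≤ 1)
    (hv : ENNReal.ofReal ((s ^ d)⁻¹) * volume (Metric.ball c R ∩ {x | θ ≤ ρ x}) ≤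
      volume (Metric.ball c R) / 2) :
    volume (Metric.ball c R ∩ {x | 4 * θ ≤ ρ x}) ≤
      ENNReal.ofReal (2 * ((2 * R * s) ^ 2 * (2 ^ d * (16 * K ^ 2 / θ)))) *
        ∫⁻ x in Metric.ball c R, {x | θ ≤ ρ x ∧ ρ x < 4 * θ}.indicator
          (fun x => ENNReal.ofReal (G x)) x := by
  have hB : MeasurableSet (Metric.ball c R) := measurableSet_ball
  have hρm : Measurable ρ := hρ.continuous.measurable
  have hL1 : MeasurableSet {x | θ ≤ ρ x} := measurableSet_le measurable_const hρm
  have hL4 : MeasurableSet {x | 4 * θ ≤ ρ x} := measurableSet_le measurable_const hρm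
  have hBt : volume (Metric.ball c R) ≠ ⊤ := measure_ball_lt_top.ne
  have hB0 : volume (Metric.ball c R) ≠ 0 := (Metric.measure_ball_pos _ _ hR).ne'
  set g := (fun x => f (ρ x / θ)) with hg
  have hgc : ContDiff ℝ 1 g := hf.comp (hρ.div_const θ)
  have hD := lt_D c R s hs.le hs1 g hgc
  have hup : ∫⁻ y in Metric.ball c R, ‖fderiv ℝ g y‖ₑ ^ 2 ≤ ENNReal.ofReal (16 * K ^ 2 / θ) *
      ∫⁻ x in Metric.ball c R, {x | θ ≤ ρ x ∧ ρ x < 4 * θ}.indicator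
          (fun x => ENNReal.ofReal (G x)) x := by
    rw [← lintegral_const_mul' _ _ (by simp)]
    refine lintegral_mono fun x => ?_
    refine (lt_grad f K hf hfK hf' ρ G hρ hG0 hρG θ hθ x).trans ?_
    by_cases h : x ∈ {x | θ ≤ ρ x ∧ ρ x < 4 * θ} <;> simp [h]
  have hlow : ∀ x ∈ Metric.ball c R ∩ {x | 4 * θ ≤ ρ x}, volume (Metric.ball c R) / 2 ≤
      ∫⁻ y in Metric.ball c R, ‖g x - g (x + s • (y - x))‖ₑ ^ 2 := by
    intro x hx
    have hgx : g x = 1 := by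
      apply hf1
      rw [le_div_iff₀ hθ]; exact hx.2
    have h1 : volume (Metric.ball c R) ≤
        ∫⁻ y in Metric.ball c R, (‖g x - g (x + s • (y - x))‖ₑ ^ 2 +
          {x | θ ≤ ρ x}.indicator (fun _ => (1 : ℝ≥0∞)) (x + s • (y - x))) := by
      rw [← setLIntegral_one]
      refine lintegral_mono fun y => ?_
      by_cases h : θ ≤ ρ (x + s • (y - x))
      · simp [h]
      · have : g (x + s • (y - x)) = 0 := by
          apply hf0
          rw [div_le_one hθ]; exact (not_le.1 h).le
        rw [hgx, this]; simp
    have hind : Measurable ({x | θ ≤ ρ x}.indicator (fun _ => (1 : ℝ≥0∞))) :=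
      measurable_const.indicator hL1
    have hind2 : Measurable (fun y => {x | θ ≤ ρ x}.indicator (fun _ => (1 : ℝ≥0∞)) (x + s • (y - x))) :=
      hind.comp (by fun_prop)
    rw [lintegral_add_right _ hind2] at h1
    have h2 := lt_half c R s hs hs1 _ hind x hx.1
    rw [lintegral_indicator_const hL1, one_mul, Measure.restrict_apply hL1, Set.inter_comm] at h2
    have h3 := h1.trans (add_le_add_right (h2.trans hv) _)
    rw [← ENNReal.add_halves (volume (Metric.ball c R))] at h3
    have : volume (Metric.ball c R) / 2 ≠ ⊤ := (ENNReal.div_lt_top hBt (by simp)).ne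
    rw [ENNReal.add_halves (volume (Metric.ball c R))] at h3
    conv_lhs at h3 => rw [← ENNReal.add_halves (volume (Metric.ball c R))]
    exact (ENNReal.add_le_add_iff_right this).1 h3
  have hlow2 : volume (Metric.ball c R) / 2 * volume (Metric.ball c R ∩ {x | 4 * θ ≤ ρ x}) ≤
      ∫⁻ x in Metric.ball c R, ∫⁻ y in Metric.ball c R, ‖g x - g (x + s • (y - x))‖ₑ ^ 2 := by
    rw [← setLIntegral_const]
    refine (setLIntegral_mono' (hB.inter hL4) hlow).trans ?_
    exact lintegral_mono_set Set.inter_subset_left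
  set I := ∫⁻ x in Metric.ball c R, {x | θ ≤ ρ x ∧ ρ x < 4 * θ}.indicator
          (fun x => ENNReal.ofReal (G x)) x
  have h4 := hlow2.trans (hD.trans (mul_le_mul_right (mul_le_mul_right hup _) _))
  have h5 : volume (Metric.ball c R) * volume (Metric.ball c R ∩ {x | 4 * θ ≤ ρ x}) ≤
      volume (Metric.ball c R) * (ENNReal.ofReal (2 * ((2 * R * s) ^ 2 * (2 ^ d * (16 * K ^ 2 / θ)))) * I) := by
    calc _ = 2 * (volume (Metric.ball c R) / 2 * volume (Metric.ball c R ∩ {x | 4 * θ ≤ ρ x})) := by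
          rw [← mul_assoc, ENNReal.mul_div_cancel (by simp) (by simp)]
      _ ≤ _ := mul_le_mul_right h4 _
      _ = _ := by
          rw [ENNReal.ofReal_mul (p := 2) (by norm_num), ENNReal.ofReal_mul (p := (2 * R * s) ^ 2) (by positivity),
            ENNReal.ofReal_mul (p := 2 ^ d) (by positivity), ENNReal.ofReal_pow (p := 2 * R * s) (by positivity),
            ENNReal.ofReal_pow (p := 2) (by positivity), ENNReal.ofReal_ofNat]
          ring
  exact (ENNReal.mul_le_mul_iff_right hB0 hBt).1 h5

theorem lt_main {d : ℕ} (hd : 1 ≤ d) (f : ℝ → ℝ) (K : ℝ) (hf : ContDiff ℝ 1 f)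
    (hf0 : ∀ t ≤ 1, f t = 0) (hf1 : ∀ t, 4 ≤ t → f t = 1)
    (hfK : ∀ t, |deriv f t| ≤ K) (hf' : ∀ t, (t < 1 ∨ 4 ≤ t) → deriv f t = 0)
    (ρ G : EuclideanSpace ℝ (Fin d) → ℝ) (hρ : ContDiff ℝ 1 ρ) (hG : Continuous G)
    (hρ0 : ∀ x, 0 ≤ ρ x)
    (hG0 : ∀ x, 0 ≤ G x) (hρG : ∀ x, ‖fderiv ℝ ρ x‖ ^ 2 ≤ 4 * ρ x * G x)
    (c : EuclideanSpace ℝ (Fin d)) (R : ℝ) (hR : 0 < R)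
    (τ : ℝ) (hτ : 0 < τ)
    (hM : ∫⁻ x in Metric.ball c R, ENNReal.ofReal (ρ x) ≤
      ENNReal.ofReal τ * (volume (Metric.ball c R) / 2)) :
    ∫⁻ x in Metric.ball c R, ENNReal.ofReal (ρ x ^ (1 + 2 / (d : ℝ))) ≤
      ENNReal.ofReal ((4 * τ) ^ (2 / (d : ℝ))) * (∫⁻ x in Metric.ball c R, ENNReal.ofReal (ρ x)) +
      ENNReal.ofReal ((16 : ℝ) ^ (1 + 2 / (d : ℝ)) * τ ^ (2 / (d : ℝ)) * 
        (2 * ((2 * R) ^ 2 * (2 ^ d * (16 * K ^ 2))))) *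
      ∫⁻ x in Metric.ball c R, ENNReal.ofReal (G x) := by
  have hB : MeasurableSet (Metric.ball c R) := measurableSet_ball
  have hρm : Measurable ρ := hρ.continuous.measurable
  have hdr : (0 : ℝ) < d := by exact_mod_cast hd
  have hL : ∀ θ, MeasurableSet {x | θ ≤ ρ x} := fun θ => measurableSet_le measurable_const hρm
  have hA : ∀ θ, MeasurableSet {x | θ ≤ ρ x ∧ ρ x < 4 * θ} := fun θ =>
    (hL θ).inter (measurableSet_lt hρm measurable_const)
  -- pointwise bound
  have hpt : ∀ x, ENNReal.ofReal (ρ x ^ (1 + 2 / (d : ℝ))) ≤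
      ENNReal.ofReal ((4 * τ) ^ (2 / (d : ℝ))) * ENNReal.ofReal (ρ x) +
      ∑' k : ℕ, {x | 4 * (4 ^ k * τ) ≤ ρ x}.indicator
        (fun _ => ENNReal.ofReal ((16 * (4 ^ k * τ)) ^ (1 + 2 / (d : ℝ)))) x := by
    intro x
    rcases le_total (ρ x) (4 * τ) with h | h
    · refine le_trans ?_ le_self_add
      rw [← ENNReal.ofReal_mul (by positivity)]
      apply ENNReal.ofReal_le_ofReal
      rw [add_comm, Real.rpow_add' (hρ0 x) (by positivity), Real.rpow_one]
      have := hρ0 x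
      gcongr
    · refine le_trans ?_ le_add_self
      obtain ⟨k, hk1, hk2⟩ := exists_nat_pow_near (x := ρ x / (4 * τ)) (y := 4)
        (by rwa [one_le_div (by positivity)]) (by norm_num)
      rw [le_div_iff₀ (by positivity)] at hk1
      rw [div_lt_iff₀ (by positivity)] at hk2
      refine le_trans ?_ (ENNReal.le_tsum k)
      rw [Set.indicator_of_mem (by rw [Set.mem_ofPred_eq]; linarith)]
      apply ENNReal.ofReal_le_ofReal
      have := hρ0 x
      gcongr
      rw [pow_succ] at hk2
      linarith
  have hlev : ∀ k : ℕ, ENNReal.ofReal ((16 * (4 ^ k * τ)) ^ (1 + 2 / (d : ℝ))) *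
      volume (Metric.ball c R ∩ {x | 4 * (4 ^ k * τ) ≤ ρ x}) ≤
      ENNReal.ofReal ((16 : ℝ) ^ (1 + 2 / (d : ℝ)) * τ ^ (2 / (d : ℝ)) * 
        (2 * ((2 * R) ^ 2 * (2 ^ d * (16 * K ^ 2))))) *
      ∫⁻ x in Metric.ball c R, {x | 4 ^ k * τ ≤ ρ x ∧ ρ x < 4 * (4 ^ k * τ)}.indicator
          (fun x => ENNReal.ofReal (G x)) x := by
    intro k
    set q : ℝ := 4 ^ k with hq
    have hq1 : 1 ≤ q := one_le_pow₀ (by norm_num)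
    have hq0 : 0 < q := by linarith
    set s : ℝ := q ^ (-(1 / (d : ℝ))) with hs
    have hs0 : 0 < s := by positivity
    have hs1 : s ≤ 1 := Real.rpow_le_one_of_one_le_of_nonpos hq1 (by
      rw [neg_nonpos]; positivity)
    have hsd : (s ^ d)⁻¹ = q := by
      rw [hs, ← Real.rpow_natCast, ← Real.rpow_mul hq0.le]
      have : -(1 / (d : ℝ)) * d = -1 := by field_simp
      rw [this, Real.rpow_neg_one, inv_inv]
    have hs2 : s ^ 2 * q ^ (2 / (d : ℝ)) = 1 := by
      rw [hs, ← Real.rpow_natCast, ← Real.rpow_mul hq0.le, ← Real.rpow_add hq0]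
      have : -(1 / (d : ℝ)) * (2 : ℕ) + 2 / d = 0 := by push_cast; field_simp; ring
      rw [this, Real.rpow_zero]
    have hv : ENNReal.ofReal ((s ^ d)⁻¹) * volume (Metric.ball c R ∩ {x | q * τ ≤ ρ x}) ≤
        volume (Metric.ball c R) / 2 := by
      rw [hsd]
      have hmk := mul_meas_ge_le_lintegral (μ := volume.restrict (Metric.ball c R))
        (hρm.ennreal_ofReal) (ENNReal.ofReal (q * τ))
      have hset : {x | ENNReal.ofReal (q * τ) ≤ ENNReal.ofReal (ρ x)} = {x | q * τ ≤ ρ x} := by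
        ext x
        simp only [Set.mem_ofPred_eq]
        rw [ENNReal.ofReal_le_ofReal_iff (hρ0 x)]
      rw [hset, Measure.restrict_apply (hL _), Set.inter_comm] at hmk
      have h := hmk.trans hM
      rw [mul_comm q, ENNReal.ofReal_mul hτ.le, mul_assoc] at h
      have hτ' : ENNReal.ofReal τ ≠ 0 := by simpa using hτ
      rw [mul_comm q]
      exact (ENNReal.mul_le_mul_iff_right hτ' (by simp)).1 h
    have hl := lt_level f K hf hf0 hf1 hfK hf' ρ G hρ hG0 hρG (q * τ) (by positivity) c R hR s hs0 hs1 hv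
    refine (mul_le_mul_right hl _).trans ?_
    rw [← mul_assoc, ← ENNReal.ofReal_mul (by positivity)]
    refine le_of_eq ?_
    congr 2
    rw [Real.mul_rpow (by norm_num) (by positivity), Real.rpow_add (x := q * τ) (by positivity), Real.rpow_one,
      Real.mul_rpow (by positivity) (by positivity)]
    have hqτ : q * τ ≠ 0 := by positivity
    calc _ = (s ^ 2 * q ^ (2 / (d : ℝ))) * (16 ^ (1 + 2 / (d : ℝ)) * τ ^ (2 / (d : ℝ)) * (2 * ((2 * R) ^ 2 * (2 ^ d * (16 * K ^ 2))))) := by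
          field_simp
      _ = _ := by rw [hs2, one_mul]
  set C0 := ENNReal.ofReal ((16 : ℝ) ^ (1 + 2 / (d : ℝ)) * τ ^ (2 / (d : ℝ)) * 
        (2 * ((2 * R) ^ 2 * (2 ^ d * (16 * K ^ 2)))))
  calc _ ≤ ∫⁻ x in Metric.ball c R, (ENNReal.ofReal ((4 * τ) ^ (2 / (d : ℝ))) * ENNReal.ofReal (ρ x) +
      ∑' k : ℕ, {x | 4 * (4 ^ k * τ) ≤ ρ x}.indicator
        (fun _ => ENNReal.ofReal ((16 * (4 ^ k * τ)) ^ (1 + 2 / (d : ℝ)))) x) := lintegral_mono hpt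
    _ = ENNReal.ofReal ((4 * τ) ^ (2 / (d : ℝ))) * (∫⁻ x in Metric.ball c R, ENNReal.ofReal (ρ x)) +
      ∑' k : ℕ, ENNReal.ofReal ((16 * (4 ^ k * τ)) ^ (1 + 2 / (d : ℝ))) *
      volume (Metric.ball c R ∩ {x | 4 * (4 ^ k * τ) ≤ ρ x}) := by
        rw [lintegral_add_left (by fun_prop), lintegral_const_mul' _ _ (by simp), lintegral_tsum]
        · congr 2; ext k
          rw [lintegral_indicator_const (hL _), Measure.restrict_apply (hL _), Set.inter_comm]
        · intro k
          exact (measurable_const.indicator (hL _)).aemeasurable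
    _ ≤ _ := by
        refine add_le_add_right ?_ _
        refine (ENNReal.tsum_le_tsum hlev).trans ?_
        rw [ENNReal.tsum_mul_left]
        refine mul_le_mul_right ?_ _
        rw [← lintegral_tsum (fun k => ((hG.measurable.ennreal_ofReal).indicator (hA _)).aemeasurable)]
        refine lintegral_mono fun x => ?_
        by_cases hex : ∃ k : ℕ, 4 ^ k * τ ≤ ρ x ∧ ρ x < 4 * (4 ^ k * τ)
        · obtain ⟨k, hk⟩ := hex
          rw [tsum_eq_single k]
          · rw [Set.indicator_of_mem (by exact hk)]
          · intro j hj
            apply Set.indicator_of_notMem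
            rintro ⟨h1, h2⟩
            apply hj
            have e1 : (4 : ℝ) ^ j < 4 ^ (k + 1) := by
              rw [pow_succ]; nlinarith [hk.2]
            have e2 : (4 : ℝ) ^ k < 4 ^ (j + 1) := by
              rw [pow_succ]; nlinarith [hk.1]
            rw [pow_lt_pow_iff_right₀ (by norm_num)] at e1 e2
            omega
        · push Not at hex
          rw [ENNReal.tsum_eq_zero.2]
          · simp
          · intro k
            apply Set.indicator_of_notMem
            rintro ⟨h1, h2⟩
            exact absurd h2 (not_lt.2 (hex k h1))

theorem lt_int {d : ℕ} {E : Type*} [NormedAddCommGroup E] (c : EuclideanSpace ℝ (Fin d)) (R : ℝ)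
    (f : EuclideanSpace ℝ (Fin d) → E) (hf : Continuous f) : IntegrableOn f (Metric.ball c R) :=
  (hf.continuousOn.integrableOn_compact (isCompact_closedBall c R)).mono_set
    Metric.ball_subset_closedBall

theorem lt_opnorm {d : ℕ} (f : EuclideanSpace ℝ (Fin d) → ℂ) (x : EuclideanSpace ℝ (Fin d)) :
    ‖fderiv ℝ f x‖ ^ 2 ≤ gradSq f x := by
  have h0 : 0 ≤ gradSq f x := by unfold gradSq; positivity
  have : ‖fderiv ℝ f x‖ ≤ √(gradSq f x) := by
    refine ContinuousLinearMap.opNorm_le_bound _ (by positivity) fun v => ?_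
    have hv : v = ∑ i, v i • EuclideanSpace.single i (1 : ℝ) := by
      ext j
      simp [Finset.sum_apply, Pi.single_apply]
    have h1 : ‖fderiv ℝ f x v‖ ≤ ∑ i, ‖fderiv ℝ f x (EuclideanSpace.single i 1)‖ * ‖v i‖ := by
      conv_lhs => rw [hv]
      rw [map_sum]
      refine (norm_sum_le _ _).trans (Finset.sum_le_sum fun i _ => ?_)
      rw [map_smul, norm_smul, mul_comm]
    refine h1.trans ?_
    rw [EuclideanSpace.norm_eq]
    exact Real.sum_mul_le_sqrt_mul_sqrt _ _ _
  calc _ ≤ √(gradSq f x) ^ 2 := by gcongr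
    _ = _ := Real.sq_sqrt h0

theorem lt_gradSq_cont {d : ℕ} (f : EuclideanSpace ℝ (Fin d) → ℂ) (hf : ContDiff ℝ 1 f) :
    Continuous (gradSq f) := by
  unfold gradSq
  have := hf.continuous_fderiv one_ne_zero
  fun_prop

theorem lt_poincare {d : ℕ} (c : EuclideanSpace ℝ (Fin d)) (R : ℝ) (hR : 0 < R)
    (u : EuclideanSpace ℝ (Fin d) → ℂ) (hu : ContDiff ℝ 1 u) :
    volume.real (Metric.ball c R) * (∫ x in Metric.ball c R, ‖u x‖ ^ 2)
      - ‖∫ x in Metric.ball c R, u x‖ ^ 2 ≤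
    2 * R ^ 2 * 2 ^ d * volume.real (Metric.ball c R) * ∫ x in Metric.ball c R, gradSq u x := by
  have hc := hu.continuous
  have hB : MeasurableSet (Metric.ball c R) := measurableSet_ball
  have hBt : volume (Metric.ball c R) ≠ ⊤ := measure_ball_lt_top.ne
  set V := volume.real (Metric.ball c R) with hV
  set S := ∫ x in Metric.ball c R, ‖u x‖ ^ 2 with hS
  set m := ∫ x in Metric.ball c R, u x with hm
  have hin : ∀ x, ∫ y in Metric.ball c R, ‖u x - u y‖ ^ 2 =
      V * ‖u x‖ ^ 2 + S - 2 * (u x * (starRingEnd ℂ) m).re := by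
    intro x
    have e : ∀ y, ‖u x - u y‖ ^ 2 = ‖u x‖ ^ 2 + ‖u y‖ ^ 2 - 2 * (u x * (starRingEnd ℂ) (u y)).re := by
      intro y
      rw [← Complex.normSq_eq_norm_sq, ← Complex.normSq_eq_norm_sq, ← Complex.normSq_eq_norm_sq,
        Complex.normSq_sub]
    simp_rw [e]
    rw [integral_sub, integral_add, integral_const_mul]
    · have : ∫ y in Metric.ball c R, (u x * (starRingEnd ℂ) (u y)).re = (u x * (starRingEnd ℂ) m).re := by
        have h1 := integral_re (𝕜 := ℂ) (μ := volume.restrict (Metric.ball c R)) (f := fun y => u x * (starRingEnd ℂ) (u y))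
          (lt_int c R _ (by fun_prop))
        rw [integral_const_mul, integral_conj] at h1
        exact h1
      rw [this, setIntegral_const, smul_eq_mul]
    · exact lt_int c R _ (by fun_prop)
    · exact lt_int c R _ (by fun_prop)
    · exact lt_int c R _ (by fun_prop)
    · exact lt_int c R _ (by fun_prop)
  have hout : ∫ x in Metric.ball c R, ∫ y in Metric.ball c R, ‖u x - u y‖ ^ 2 =
      2 * (V * S - ‖m‖ ^ 2) := by
    simp_rw [hin]
    rw [integral_sub, integral_add, integral_const_mul, integral_const_mul]
    · have : ∫ y in Metric.ball c R, (u y * (starRingEnd ℂ) m).re = ‖m‖ ^ 2 := by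
        have h1 := integral_re (𝕜 := ℂ) (μ := volume.restrict (Metric.ball c R)) (f := fun y => u y * (starRingEnd ℂ) m)
          (lt_int c R _ (by fun_prop))
        rw [integral_mul_const] at h1
        refine h1.trans ?_
        rw [← hm, Complex.mul_conj, ← Complex.normSq_eq_norm_sq]
        simp
      rw [this, setIntegral_const, smul_eq_mul]
      ring
    · exact lt_int c R _ (by fun_prop)
    · exact lt_int c R _ (by fun_prop)
    · exact lt_int c R _ (by fun_prop)
    · exact lt_int c R _ (by fun_prop)
  have hD := lt_D c R 1 zero_le_one le_rfl u hu
  have hl : ∫⁻ x in Metric.ball c R, ∫⁻ y in Metric.ball c R, ‖u x - u (x + (1 : ℝ) • (y - x))‖ₑ ^ 2 =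
      ENNReal.ofReal (2 * (V * S - ‖m‖ ^ 2)) := by
    rw [← hout, ofReal_integral_eq_lintegral_ofReal]
    · congr 1; ext x
      rw [ofReal_integral_eq_lintegral_ofReal]
      · congr 1; ext y
        rw [one_smul, add_sub_cancel, ← ofReal_norm, ENNReal.ofReal_pow (by positivity)]
      · exact lt_int c R _ (by fun_prop)
      · exact Filter.Eventually.of_forall fun y => by positivity
    · simp_rw [hin]
      exact lt_int c R _ (by fun_prop)
    · exact Filter.Eventually.of_forall fun y => by positivity
  have hr : ∫⁻ y in Metric.ball c R, ‖fderiv ℝ u y‖ₑ ^ 2 ≤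
      ENNReal.ofReal (∫ x in Metric.ball c R, gradSq u x) := by
    rw [ofReal_integral_eq_lintegral_ofReal]
    · refine lintegral_mono fun y => ?_
      rw [← ofReal_norm, ← ENNReal.ofReal_pow (by positivity)]
      exact ENNReal.ofReal_le_ofReal (lt_opnorm u y)
    · exact lt_int c R _ (lt_gradSq_cont u hu)
    · exact Filter.Eventually.of_forall fun y => by unfold gradSq; positivity
  rw [hl] at hD
  have hT0 : 0 ≤ ∫ x in Metric.ball c R, gradSq u x :=
    integral_nonneg fun y => by unfold gradSq; positivity
  have h2 := hD.trans (mul_le_mul_right (mul_le_mul_right hr _) _)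
  have hvol : volume (Metric.ball c R) = ENNReal.ofReal V := (ofReal_measureReal hBt).symm
  have hV0 : 0 ≤ V := measureReal_nonneg
  have h2d : (2 : ℝ≥0∞) ^ d = ENNReal.ofReal (2 ^ d) := by
    rw [ENNReal.ofReal_pow (by norm_num)]; simp
  rw [hvol, h2d, ← ENNReal.ofReal_pow (by positivity), ← ENNReal.ofReal_mul (by positivity),
    ← ENNReal.ofReal_mul (by positivity), ← ENNReal.ofReal_mul (by positivity),
    ENNReal.ofReal_le_ofReal_iff (by positivity)] at h2
  linarith

theorem lt_bessel {d N : ℕ} (c : EuclideanSpace ℝ (Fin d)) (R : ℝ)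
    (u : Fin N → EuclideanSpace ℝ (Fin d) → ℂ) (hu : ∀ n, Continuous (u n))
    (ho : ∀ m n : Fin N, ∫ x in Metric.ball c R, u m x * (starRingEnd ℂ) (u n x)
            = if m = n then 1 else 0) :
    ∑ n, ‖∫ x in Metric.ball c R, u n x‖ ^ 2 ≤ volume.real (Metric.ball c R) := by
  have hBt : volume (Metric.ball c R) ≠ ⊤ := measure_ball_lt_top.ne
  set μ := volume.restrict (Metric.ball c R) with hμ
  have hfin : IsFiniteMeasure μ := ⟨by rw [hμ, Measure.restrict_apply_univ]; exact hBt.lt_top⟩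
  have hL : ∀ n, MemLp (u n) 2 μ := by
    intro n
    rw [memLp_two_iff_integrable_sq_norm (hu n).aestronglyMeasurable]
    have := hu n
    exact lt_int c R _ (by fun_prop)
  have h1 : MemLp (fun _ : EuclideanSpace ℝ (Fin d) => (1 : ℂ)) 2 μ := memLp_const _
  have hinner : ∀ (f g : EuclideanSpace ℝ (Fin d) → ℂ) (hf : MemLp f 2 μ) (hg : MemLp g 2 μ),
      inner ℂ (hf.toLp f) (hg.toLp g) = ∫ x, g x * (starRingEnd ℂ) (f x) ∂μ := by
    intro f g hf hg
    rw [L2.inner_def]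
    apply integral_congr_ae
    filter_upwards [hf.coeFn_toLp, hg.coeFn_toLp] with x h1 h2
    rw [h1, h2, RCLike.inner_apply]
  have hon : Orthonormal ℂ (fun n => (hL n).toLp (u n)) := by
    rw [orthonormal_iff_ite]
    intro i j
    rw [hinner, ho j i]
    simp [eq_comm]
  have hb := hon.sum_inner_products_le (x := h1.toLp _) (s := Finset.univ)
  have hx : ‖h1.toLp _‖ ^ 2 = volume.real (Metric.ball c R) := by
    have := inner_self_eq_norm_sq (𝕜 := ℂ) (h1.toLp _)
    rw [← this, hinner]
    simp [hμ]
  rw [hx] at hb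
  refine le_trans (le_of_eq ?_) hb
  refine Finset.sum_congr rfl fun n _ => ?_
  rw [hinner]
  simp only [one_mul]
  rw [integral_conj, RCLike.norm_conj]

theorem lt_rho {d N : ℕ} (u : Fin N → EuclideanSpace ℝ (Fin d) → ℂ) (lam : Fin N → ℝ)
    (hu : ∀ n, ContDiff ℝ 1 (u n)) (hl : ∀ n, 0 ≤ lam n) (x : EuclideanSpace ℝ (Fin d)) :
    ‖fderiv ℝ (fun x => ∑ n, lam n * ‖u n x‖ ^ 2) x‖ ^ 2 ≤
      4 * (∑ n, lam n * ‖u n x‖ ^ 2) * (∑ n, lam n * gradSq (u n) x) := by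
  have hg0 : ∀ n, 0 ≤ gradSq (u n) x := fun n => by unfold gradSq; positivity
  have hd : HasFDerivAt (fun x => ∑ n, lam n * ‖u n x‖ ^ 2)
      (∑ n, lam n • (2 • (innerSL ℝ (u n x)).comp (fderiv ℝ (u n) x))) x := by
    apply HasFDerivAt.fun_sum
    intro n _
    exact ((((hu n).differentiable one_ne_zero) x).hasFDerivAt.norm_sq).const_mul (lam n)
  have h1 : ‖fderiv ℝ (fun x => ∑ n, lam n * ‖u n x‖ ^ 2) x‖ ≤
      2 * ∑ n, (√(lam n) * ‖u n x‖) * (√(lam n) * √(gradSq (u n) x)) := by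
    rw [hd.fderiv, Finset.mul_sum]
    refine (norm_sum_le _ _).trans (Finset.sum_le_sum fun n _ => ?_)
    rw [norm_smul, Real.norm_of_nonneg (hl n), two_smul]
    have h3 : ‖(innerSL ℝ (u n x)).comp (fderiv ℝ (u n) x)‖ ≤ ‖u n x‖ * √(gradSq (u n) x) := by
      refine (ContinuousLinearMap.opNorm_comp_le _ _).trans ?_
      rw [innerSL_apply_norm]
      gcongr
      exact Real.le_sqrt_of_sq_le (lt_opnorm _ _)
    have h4 := norm_add_le ((innerSL ℝ (u n x)).comp (fderiv ℝ (u n) x))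
      ((innerSL ℝ (u n x)).comp (fderiv ℝ (u n) x))
    have h5 := Real.mul_self_sqrt (hl n)
    calc _ ≤ lam n * (‖u n x‖ * √(gradSq (u n) x) + ‖u n x‖ * √(gradSq (u n) x)) := by
          have := hl n
          gcongr
          linarith
      _ = _ := by
          conv_lhs => rw [← h5]
          ring
  have h2 := Finset.sum_mul_sq_le_sq_mul_sq Finset.univ (fun n => √(lam n) * ‖u n x‖)
    (fun n => √(lam n) * √(gradSq (u n) x))
  simp_rw [mul_pow] at h2
  simp_rw [fun n => Real.sq_sqrt (hl n), fun n => Real.sq_sqrt (hg0 n)] at h2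
  calc _ ≤ (2 * ∑ n, (√(lam n) * ‖u n x‖) * (√(lam n) * √(gradSq (u n) x))) ^ 2 := by gcongr
    _ ≤ _ := by
      rw [mul_pow]
      linarith

/-- **Lieb–Thirring inequality on balls**, with mass constraint `a ≤ ∫_B ρ ≤ b`
for fixed `1 < a < b < ∞`; the constant `C = C(d,a,b)` depends only on `d, a, b`. -/
theorem lieb_thirring_ball_mass_window (d : ℕ) (hd : 1 ≤ d) (a b : ℝ)
    (ha : 1 < a) (hab : a < b) :
    ∃ C : ℝ, 0 < C ∧
      ∀ (c : EuclideanSpace ℝ (Fin d)) (r : ℝ), 0 < r →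
      ∀ (N : ℕ) (u : Fin N → EuclideanSpace ℝ (Fin d) → ℂ) (lam : Fin N → ℝ),
        (∀ n, ContDiff ℝ 1 (u n)) →
        (∀ m n : Fin N,
          ∫ x in Metric.ball c r, u m x * (starRingEnd ℂ) (u n x)
            = if m = n then 1 else 0) →
        (∀ n, 0 ≤ lam n ∧ lam n ≤ 1) →
        a ≤ (∫ x in Metric.ball c r, ∑ n, lam n * ‖u n x‖ ^ 2) →
        (∫ x in Metric.ball c r, ∑ n, lam n * ‖u n x‖ ^ 2) ≤ b →
        ∑ n, lam n * ∫ x in Metric.ball c r, gradSq (u n) x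
          ≥ (1 / C) *
            ∫ x in Metric.ball c r, (∑ n, lam n * ‖u n x‖ ^ 2) ^ (1 + 2 / (d : ℝ)) := by
  obtain ⟨f, K, hK, hf, hf0, hf1, hfK, hf'⟩ := lt_cutoff
  have hdr : (0 : ℝ) < d := by exact_mod_cast hd
  set ω := volume.real (Metric.ball (0 : EuclideanSpace ℝ (Fin d)) 1) with hω
  have hω0 : 0 < ω := ENNReal.toReal_pos (Metric.measure_ball_pos _ _ one_pos).ne'
    measure_ball_lt_top.ne
  have ha1 : 0 < a - 1 := by linarith
  have hb0 : 0 < b := by linarith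
  set A : ℝ := (2 * b / ω) ^ (2 / (d : ℝ)) with hA
  have hA0 : 0 < A := by positivity
  refine ⟨4 ^ (2 / (d : ℝ)) * A * b * (2 * 2 ^ d / (a - 1)) +
    16 ^ (1 + 2 / (d : ℝ)) * A * (2 * (4 * (2 ^ d * (16 * K ^ 2)))), by positivity, ?_⟩
  intro c R hR N u lam hu ho hlam hMa hMb
  have hl : ∀ n, 0 ≤ lam n := fun n => (hlam n).1
  have hc : ∀ n, Continuous (u n) := fun n => (hu n).continuous
  have hgc : ∀ n, Continuous (gradSq (u n)) := fun n => lt_gradSq_cont _ (hu n)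
  have hg0 : ∀ n x, 0 ≤ gradSq (u n) x := fun n x => by unfold gradSq; positivity
  set V := volume.real (Metric.ball c R) with hV
  have hBt : volume (Metric.ball c R) ≠ ⊤ := measure_ball_lt_top.ne
  have hV0 : 0 < V := ENNReal.toReal_pos (Metric.measure_ball_pos _ _ hR).ne' hBt
  have hVω : V = R ^ d * ω := by
    rw [hV, hω, measureReal_def, measureReal_def, Measure.addHaar_ball_of_pos _ _ hR,
      ENNReal.toReal_mul, ENNReal.toReal_ofReal (by positivity)]
    simp
  set ρ : EuclideanSpace ℝ (Fin d) → ℝ := fun x => ∑ n, lam n * ‖u n x‖ ^ 2 with hρ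
  set G : EuclideanSpace ℝ (Fin d) → ℝ := fun x => ∑ n, lam n * gradSq (u n) x with hG
  have hρc : ContDiff ℝ 1 ρ := by
    apply ContDiff.sum
    intro n _
    exact contDiff_const.mul ((hu n).norm_sq ℝ)
  have hGc : Continuous G := by fun_prop
  have hρ0 : ∀ x, 0 ≤ ρ x := fun x => Finset.sum_nonneg fun n _ => mul_nonneg (hl n) (by positivity)
  have hG0 : ∀ x, 0 ≤ G x := fun x => Finset.sum_nonneg fun n _ => mul_nonneg (hl n) (hg0 n x)
  have hT : ∑ n, lam n * ∫ x in Metric.ball c R, gradSq (u n) x = ∫ x in Metric.ball c R, G x := by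
    rw [hG, integral_finsetSum]
    · simp_rw [integral_const_mul]
    · intro n _
      have := hgc n
      exact lt_int c R _ (by fun_prop)
  have hMs : ∫ x in Metric.ball c R, ρ x = ∑ n, lam n * ∫ x in Metric.ball c R, ‖u n x‖ ^ 2 := by
    rw [hρ, integral_finsetSum]
    · simp_rw [integral_const_mul]
    · intro n _
      have := hc n
      exact lt_int c R _ (by fun_prop)
  have hρint : IntegrableOn ρ (Metric.ball c R) := lt_int c R _ hρc.continuous
  have hGint : IntegrableOn G (Metric.ball c R) := lt_int c R _ hGc
  have hpc : Continuous fun x => ρ x ^ (1 + 2 / (d : ℝ)) :=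
    hρc.continuous.rpow_const fun x => Or.inr (by positivity)
  have hpint : IntegrableOn (fun x => ρ x ^ (1 + 2 / (d : ℝ))) (Metric.ball c R) := lt_int c R _ hpc
  change a ≤ ∫ x in Metric.ball c R, ρ x at hMa
  change ∫ x in Metric.ball c R, ρ x ≤ b at hMb
  rw [hT]
  -- the Poincare step
  have hpo : V * (∫ x in Metric.ball c R, ρ x) - V ≤
      2 * R ^ 2 * 2 ^ d * V * ∫ x in Metric.ball c R, G x := by
    have hbes := lt_bessel c R u hc ho
    rw [← hV] at hbes
    have hs : ∑ n, lam n * ‖∫ x in Metric.ball c R, u n x‖ ^ 2 ≤ V := by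
      refine le_trans (Finset.sum_le_sum fun n _ => ?_) hbes
      exact mul_le_of_le_one_left (by positivity) (hlam n).2
    have hp : ∑ n, lam n * (V * (∫ x in Metric.ball c R, ‖u n x‖ ^ 2)
        - ‖∫ x in Metric.ball c R, u n x‖ ^ 2) ≤
        ∑ n, lam n * (2 * R ^ 2 * 2 ^ d * V * ∫ x in Metric.ball c R, gradSq (u n) x) :=
      Finset.sum_le_sum fun n _ => mul_le_mul_of_nonneg_left (lt_poincare c R hR _ (hu n)) (hl n)
    have e1 : ∑ n, lam n * (V * (∫ x in Metric.ball c R, ‖u n x‖ ^ 2)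
        - ‖∫ x in Metric.ball c R, u n x‖ ^ 2) = V * (∫ x in Metric.ball c R, ρ x) -
        ∑ n, lam n * ‖∫ x in Metric.ball c R, u n x‖ ^ 2 := by
      rw [hMs, Finset.mul_sum, ← Finset.sum_sub_distrib]
      exact Finset.sum_congr rfl fun n _ => by ring
    have e2 : ∑ n, lam n * (2 * R ^ 2 * 2 ^ d * V * ∫ x in Metric.ball c R, gradSq (u n) x) =
        2 * R ^ 2 * 2 ^ d * V * ∫ x in Metric.ball c R, G x := by
      rw [← hT, Finset.mul_sum]
      exact Finset.sum_congr rfl fun n _ => by ring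
    rw [e1, e2] at hp
    linarith
  set M := ∫ x in Metric.ball c R, ρ x with hM
  set T := ∫ x in Metric.ball c R, G x with hTdef
  have hT0 : 0 ≤ T := integral_nonneg hG0
  have hM0 : 0 < M := by linarith
  have hpo2 : M - 1 ≤ 2 * R ^ 2 * 2 ^ d * T := by
    have : V * (M - 1) ≤ V * (2 * R ^ 2 * 2 ^ d * T) := by linarith
    exact le_of_mul_le_mul_left this hV0
  have hRT : (R ^ 2)⁻¹ ≤ 2 * 2 ^ d / (a - 1) * T := by
    rw [inv_le_iff_one_le_mul₀ (by positivity), div_mul_eq_mul_div, div_mul_eq_mul_div,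
      le_div_iff₀ ha1]
    linarith
  -- the main estimate
  set τ := 2 * M / V with hτ
  have hτ0 : 0 < τ := by positivity
  have hvol : volume (Metric.ball c R) = ENNReal.ofReal V := (ofReal_measureReal hBt).symm
  have hlM : ∫⁻ x in Metric.ball c R, ENNReal.ofReal (ρ x) = ENNReal.ofReal M := by
    rw [hM, ofReal_integral_eq_lintegral_ofReal hρint (Filter.Eventually.of_forall hρ0)]
  have hlT : ∫⁻ x in Metric.ball c R, ENNReal.ofReal (G x) = ENNReal.ofReal T := by
    rw [hTdef, ofReal_integral_eq_lintegral_ofReal hGint (Filter.Eventually.of_forall hG0)]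
  have hlP : ∫⁻ x in Metric.ball c R, ENNReal.ofReal (ρ x ^ (1 + 2 / (d : ℝ))) =
      ENNReal.ofReal (∫ x in Metric.ball c R, ρ x ^ (1 + 2 / (d : ℝ))) := by
    rw [ofReal_integral_eq_lintegral_ofReal hpint
      (Filter.Eventually.of_forall fun x => Real.rpow_nonneg (hρ0 x) _)]
  have hmain := lt_main hd f K hf hf0 hf1 hfK hf' ρ G hρc hGc hρ0 hG0
    (lt_rho u lam hu hl) c R hR τ hτ0 (by
      rw [hlM, hvol]
      have : ENNReal.ofReal V / 2 = ENNReal.ofReal (V / 2) := by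
        rw [ENNReal.ofReal_div_of_pos two_pos]; simp
      rw [this, ← ENNReal.ofReal_mul hτ0.le]
      apply ENNReal.ofReal_le_ofReal
      rw [hτ]
      apply le_of_eq
      field_simp)
  rw [hlM, hlT, hlP, ← ENNReal.ofReal_mul (by positivity), ← ENNReal.ofReal_mul (by positivity),
    ← ENNReal.ofReal_add (by positivity) (by positivity),
    ENNReal.ofReal_le_ofReal_iff (by positivity)] at hmain
  have hτA : τ ^ (2 / (d : ℝ)) ≤ A * (R ^ 2)⁻¹ := by
    have e : τ = (2 * M / ω) * (R ^ d)⁻¹ := by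
      rw [hτ, hVω]; field_simp
    have e2 : ((R ^ d)⁻¹) ^ (2 / (d : ℝ)) = (R ^ 2)⁻¹ := by
      rw [Real.inv_rpow (by positivity), ← Real.rpow_natCast R d, ← Real.rpow_mul hR.le]
      have : (d : ℝ) * (2 / d) = (2 : ℕ) := by push_cast; field_simp
      rw [this, Real.rpow_natCast]
    rw [e, Real.mul_rpow (by positivity) (by positivity), e2, hA]
    gcongr
  rw [Real.mul_rpow (by norm_num) hτ0.le] at hmain
  rw [ge_iff_le, one_div, inv_mul_le_iff₀ (by positivity)]
  refine hmain.trans ?_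
  calc _ ≤ 4 ^ (2 / (d : ℝ)) * (A * (R ^ 2)⁻¹) * b + 16 ^ (1 + 2 / (d : ℝ)) * (A * (R ^ 2)⁻¹) *
          (2 * ((2 * R) ^ 2 * (2 ^ d * (16 * K ^ 2)))) * T := by gcongr
    _ = 4 ^ (2 / (d : ℝ)) * A * b * (R ^ 2)⁻¹ + 16 ^ (1 + 2 / (d : ℝ)) * A *
          (2 * (4 * (2 ^ d * (16 * K ^ 2)))) * T := by
        field_simp
        ring
    _ ≤ 4 ^ (2 / (d : ℝ)) * A * b * (2 * 2 ^ d / (a - 1) * T) + 16 ^ (1 + 2 / (d : ℝ)) * A *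
          (2 * (4 * (2 ^ d * (16 * K ^ 2)))) * T := by gcongr
    _ = _ := by ring
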